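/- The maximum cardinality of an antichain in the symmetric group S_n under absolute order equals the largest unsigned Stirling number of the first kind: max{|A| : A an antichain in (S_n, ≤_T)} = max over 1 ≤ k ≤ n of s(n, k). In particular, some level {π ∈ S_n : c(π) = k} is an antichain of maximum cardinality. -/

import Mathlib

/-- The number of cycles of a permutation of `{1,…,n}` (here `Fin n`),
counting fixed points as cycles of length one. -/
def cycleCount {n : ℕ} (π : Equiv.Perm (Fin n)) : ℕ :=
  π.cycleType.card + (Finset.univ.filter fun x => π x = x).card

/-- The absolute length `ℓ_T(π) = n - c(π)`. -/
def absLength {n : ℕ} (π : Equiv.Perm (Fin n)) : ℕ :=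
  n - cycleCount π

/-- The absolute order on `S_n`: `σ ≤_T π` iff `ℓ_T(π) = ℓ_T(σ) + ℓ_T(σ⁻¹ π)`. -/
def absLe {n : ℕ} (σ π : Equiv.Perm (Fin n)) : Prop :=
  absLength π = absLength σ + absLength (σ⁻¹ * π)

/-- The unsigned Stirling number of the first kind `s(n,k)`: the number of
permutations of an `n`-element set with exactly `k` cycles (fixed points
counting as cycles of length one). -/
def stirlingFirst (n k : ℕ) : ℕ :=
  (Finset.univ.filter fun π : Equiv.Perm (Fin n) => cycleCount π = k).card

/-!
The permutation `(0 p) ∘ e` of `Fin (n + 1)`, where `p : Fin (n + 1)` and `e` permutes the nonzero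
elements, has absolute length `ℓ_T(e)` if `p = 0` and `ℓ_T(e) + 1` otherwise. So, as a ranked set,
`S_{n+1}` is the product of `S_n` with a claw (a minimum `0` below `n` pairwise incomparable
elements), and the absolute order contains the product order. Multiplying by a claw preserves
log-concavity of the level sizes and, in its presence, the normalized matching property: averages
of monotone functions over consecutive levels increase (a case of Harper's product theorem). By
induction the absolute order has this property. Applied to the indicator functions of up-sets, it
gives the LYM inequality, and hence that no antichain is larger than the largest level.
-/

section LogConcave

/-- Log-concavity of a sequence of natural numbers without internal zeros: the ratios
`a (k + 1) / a k` are nonincreasing, in the cross-multiplied form comparing any two of them. -/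
def IsLogConcave (a : ℕ → ℕ) : Prop :=
  ∀ ⦃i j⦄, i ≤ j → a i * a (j + 1) ≤ a (i + 1) * a j

/-- The sequence `0, a 0, a 1, …`, whose generating function is `X` times that of `a`. -/
def delay (a : ℕ → ℕ) : ℕ → ℕ
  | 0 => 0
  | k + 1 => a k

variable {a : ℕ → ℕ}

theorem IsLogConcave.succ_eq_zero (ha : IsLogConcave a) (ha₀ : a 0 ≠ 0) {k : ℕ} (hk : a k = 0) :
    a (k + 1) = 0 := by
  have h := ha k.zero_le
  rw [hk, mul_zero, Nat.le_zero, mul_eq_zero] at h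
  exact h.resolve_left ha₀

theorem IsLogConcave.delay_mul_le (ha : IsLogConcave a) {i j : ℕ} (hij : i ≤ j) :
    delay a i * a j ≤ a i * delay a j := by
  match i, j, hij with
  | 0, _, _ => simp [delay]
  | i + 1, j + 1, hij => exact ha (Nat.le_of_succ_le_succ hij)

theorem IsLogConcave.delay_mul_succ_le (ha : IsLogConcave a) {i j : ℕ} (hij : i ≤ j) :
    delay a i * a (j + 1) ≤ a (i + 1) * delay a j := by
  rcases hij.eq_or_lt with rfl | hlt
  · match i with
    | 0 => simp [delay]
    | i + 1 => exact (mul_comm _ _).le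
  · calc delay a i * a (j + 1) ≤ a i * a j := ha.delay_mul_le (i := i) (j := j + 1) (by lia)
      _ ≤ a (i + 1) * delay a j := by
        obtain ⟨j, rfl⟩ := Nat.exists_eq_succ_of_ne_zero (Nat.ne_zero_of_lt hlt)
        exact ha (Nat.le_of_lt_succ hlt)

theorem IsLogConcave.add_mul_delay (ha : IsLogConcave a) (m : ℕ) :
    IsLogConcave fun k => a k + m * delay a k := by
  intro i j hij
  calc (a i + m * delay a i) * (a (j + 1) + m * a j)
      = a i * a (j + 1) + m * (delay a i * a (j + 1)) + m * (a i * a j)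
          + m * m * (delay a i * a j) := by ring
    _ ≤ a (i + 1) * a j + m * (a (i + 1) * delay a j) + m * (a i * a j)
          + m * m * (a i * delay a j) := by
        gcongr ?_ + _ * ?_ + _ + _ * ?_
        exacts [ha hij, ha.delay_mul_succ_le hij, ha.delay_mul_le hij]
    _ = (a (i + 1) + m * a i) * (a j + m * delay a j) := by ring

end LogConcave

section NormalizedMatching

open Finset

/-- The number of elements of rank `k`: the `k`-th Whitney number of the second kind when `ρ` is
the rank function of a poset. -/
def levelCard {α : Type*} [Fintype α] (ρ : α → ℕ) (k : ℕ) : ℕ :=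
  #{x | ρ x = k}

/-- The sum of `f` over the elements of rank `k`; divided by `levelCard ρ k`, it is the average of
`f` over that level. -/
def levelSum {α : Type*} [Fintype α] (ρ f : α → ℕ) (k : ℕ) : ℕ :=
  ∑ x with ρ x = k, f x

/-- The normalized matching property of the relation `r` ranked by `ρ`, stated as: the average of a
monotone function over a level is at most its average over the next one. It is used with `f` the
indicator function of an up-set; arbitrary monotone `f` make it stable under products. -/
def HasNormalizedMatching {α : Type*} [Fintype α] (r : α → α → Prop) (ρ : α → ℕ) : Prop :=
  ∀ ⦃f : α → ℕ⦄, (∀ ⦃x y⦄, r x y → f x ≤ f y) →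
    ∀ k, levelSum ρ f k * levelCard ρ (k + 1) ≤ levelSum ρ f (k + 1) * levelCard ρ k

variable {α β : Type*} [Fintype α] [Fintype β] {r : α → α → Prop} {ρ : α → ℕ}

theorem levelSum_one (ρ : α → ℕ) (k : ℕ) : levelSum ρ (fun _ => 1) k = levelCard ρ k :=
  (card_eq_sum_ones _).symm

theorem levelSum_eq_zero {k : ℕ} (hk : levelCard ρ k = 0) (f : α → ℕ) : levelSum ρ f k = 0 := by
  rw [levelSum, card_eq_zero.1 hk, sum_empty]

theorem levelCard_apply_ne_zero (ρ : α → ℕ) (x : α) : levelCard ρ (ρ x) ≠ 0 :=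
  card_ne_zero_of_mem (mem_filter.2 ⟨mem_univ x, rfl⟩)

section Claw

variable {m : ℕ} {e : Fin (m + 1) × α ≃ β} {ρ' : β → ℕ} {s : β → β → Prop}

theorem levelSum_claw (hρ : ∀ p x, ρ' (e (p, x)) = ρ x + if p = 0 then 0 else 1) (f : β → ℕ)
    (k : ℕ) :
    levelSum ρ' f k = levelSum ρ (fun x => f (e (0, x))) k +
      delay (levelSum ρ fun x => ∑ j : Fin m, f (e (j.succ, x))) k := by
  simp only [levelSum, sum_filter]
  rw [← e.sum_comp, Fintype.sum_prod_type, Fin.sum_univ_succ, sum_comm]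
  cases k <;> simp [hρ, delay, levelSum, sum_filter, sum_ite_irrel]

theorem levelCard_claw (hρ : ∀ p x, ρ' (e (p, x)) = ρ x + if p = 0 then 0 else 1) (k : ℕ) :
    levelCard ρ' k = levelCard ρ k + m * delay (levelCard ρ) k := by
  rw [← levelSum_one, levelSum_claw hρ, levelSum_one]
  cases k <;> simp [delay, levelSum, levelCard, mul_comm]

/-- With `N₀, N₁, N₂` consecutive level sizes of a ranked set, and `U`, `V` the level sums over the
minimum and over the `m` leaves of a claw, the two sides compare averages over consecutive levels of
the product. -/
theorem claw_average_le {m N₀ N₁ N₂ U₁ U₂ V₀ V₁ : ℕ} (hN : N₀ * N₂ ≤ N₁ * N₁)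
    (hV₀ : N₀ = 0 → V₀ = 0) (hU : U₁ * N₂ ≤ U₂ * N₁) (hV : V₀ * N₁ ≤ V₁ * N₀)
    (hUV : m * U₁ ≤ V₁) :
    (U₁ + V₀) * (N₂ + m * N₁) ≤ (U₂ + V₁) * (N₁ + m * N₀) := by
  have cross : V₀ * N₂ + m * U₁ * N₁ ≤ V₁ * N₁ + m * U₂ * N₀ := by
    rcases N₁.eq_zero_or_pos with rfl | hN₁
    · have : V₀ * N₂ = 0 := by
        rcases mul_eq_zero.1 (Nat.le_zero.1 hN) with h | h
        · rw [hV₀ h, zero_mul]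
        · rw [h, mul_zero]
      simp [this]
    · refine Nat.le_of_mul_le_mul_left ?_ hN₁
      calc N₁ * (V₀ * N₂ + m * U₁ * N₁)
          = V₀ * N₁ * N₂ + m * U₁ * (N₁ * N₁) := by ring
        _ ≤ V₁ * N₀ * N₂ + m * U₁ * (N₁ * N₁) := by gcongr
        _ = m * U₁ * (N₁ * N₁) + V₁ * (N₀ * N₂) := by ring
        _ ≤ m * U₁ * (N₀ * N₂) + V₁ * (N₁ * N₁) := mul_add_mul_le_mul_add_mul hUV hN
        _ = m * N₀ * (U₁ * N₂) + V₁ * (N₁ * N₁) := by ring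
        _ ≤ m * N₀ * (U₂ * N₁) + V₁ * (N₁ * N₁) := by gcongr
        _ = N₁ * (V₁ * N₁ + m * U₂ * N₀) := by ring
  calc (U₁ + V₀) * (N₂ + m * N₁)
      = U₁ * N₂ + (V₀ * N₂ + m * U₁ * N₁) + m * (V₀ * N₁) := by ring
    _ ≤ U₂ * N₁ + (V₁ * N₁ + m * U₂ * N₀) + m * (V₁ * N₀) := by gcongr
    _ = (U₂ + V₁) * (N₁ + m * N₀) := by ring

theorem HasNormalizedMatching.claw (h : HasNormalizedMatching r ρ)
    (hlc : IsLogConcave (levelCard ρ))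
    (hρ : ∀ p x, ρ' (e (p, x)) = ρ x + if p = 0 then 0 else 1)
    (hfiber : ∀ p x y, r x y → s (e (p, x)) (e (p, y)))
    (hclaw : ∀ p x, s (e (0, x)) (e (p, x))) : HasNormalizedMatching s ρ' := by
  intro f hf k
  have hbase := h (f := fun x => f (e (0, x))) fun x y hxy => hf (hfiber 0 x y hxy)
  have hleaves := h (f := fun x => ∑ j : Fin m, f (e (j.succ, x))) fun x y hxy =>
    sum_le_sum fun j _ => hf (hfiber j.succ x y hxy)
  have hbase_le_leaves : m * levelSum ρ (fun x => f (e (0, x))) k ≤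
      levelSum ρ (fun x => ∑ j : Fin m, f (e (j.succ, x))) k := by
    rw [levelSum, mul_sum]
    refine sum_le_sum fun x _ => ?_
    simpa using card_nsmul_le_sum univ (fun j : Fin m => f (e (j.succ, x))) _
      fun j _ => hf (hclaw j.succ x)
  simp only [levelSum_claw hρ, levelCard_claw hρ]
  refine claw_average_le (hlc.delay_mul_le k.le_succ) ?_ (hbase k) ?_ hbase_le_leaves
  · cases k with
    | zero => exact fun _ => rfl
    | succ k => exact fun hk => levelSum_eq_zero hk _
  · cases k with
    | zero => simp [delay]
    | succ k => exact hleaves k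

end Claw

section LYM

open Classical in
/-- The elements of rank `k` in the up-set generated by `A`. -/
noncomputable def upperLevel (r : α → α → Prop) (ρ : α → ℕ) (A : Finset α) (k : ℕ) : Finset α :=
  {x | ρ x = k ∧ ∃ a ∈ A, r a x}

theorem card_upperLevel_le (A : Finset α) (k : ℕ) : #(upperLevel r ρ A k) ≤ levelCard ρ k := by
  classical exact card_le_card <| monotone_filter_right _ fun _ _ hx => hx.1

theorem HasNormalizedMatching.card_upperLevel_mul_le [IsTrans α r]
    (h : HasNormalizedMatching r ρ) (A : Finset α) (k : ℕ) :
    #(upperLevel r ρ A k) * levelCard ρ (k + 1) ≤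
      #(upperLevel r ρ A (k + 1)) * levelCard ρ k := by
  classical
  have hcard (k) : #(upperLevel r ρ A k) =
      levelSum ρ (fun x => if ∃ a ∈ A, r a x then 1 else 0) k := by
    simp [upperLevel, levelSum, filter_filter]
  rw [hcard, hcard]
  refine h (fun x y hxy => ?_) k
  split_ifs with hx hy
  · rfl
  · obtain ⟨a, ha, hax⟩ := hx
    exact absurd ⟨a, ha, _root_.trans hax hxy⟩ hy
  · exact Nat.zero_le _
  · rfl

theorem card_level_add_card_upperLevel_le [Std.Refl r] {A : Finset α}
    (hA : IsAntichain r (A : Set α)) (k : ℕ) :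
    #{a ∈ A | ρ a = k} + #(upperLevel r ρ {a ∈ A | ρ a < k} k) ≤
      #(upperLevel r ρ {a ∈ A | ρ a < k + 1} k) := by
  classical
  rw [← card_union_of_disjoint]
  · refine card_le_card (union_subset (fun x hx => ?_) fun x hx => ?_)
    · have hx := mem_filter.1 hx
      simpa [upperLevel, hx.2] using ⟨x, ⟨hx.1, by lia⟩, refl x⟩
    · obtain ⟨hxk, a, ha, hax⟩ := (mem_filter.1 hx).2
      have ha := mem_filter.1 ha
      simpa [upperLevel, hxk] using ⟨a, ⟨ha.1, by lia⟩, hax⟩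
  · refine disjoint_left.2 fun x hxA hx => ?_
    have hxA := mem_filter.1 hxA
    obtain ⟨hxk, a, ha, hax⟩ := (mem_filter.1 hx).2
    have ha := mem_filter.1 ha
    exact hA ha.1 hxA.1 (by rintro rfl; lia) hax

theorem sum_inv_levelCard_filter_lt_succ (ρ : α → ℕ) (A : Finset α) (k : ℕ) :
    ∑ a ∈ A with ρ a < k + 1, (levelCard ρ (ρ a) : ℚ)⁻¹ =
      #{a ∈ A | ρ a = k} / levelCard ρ k + ∑ a ∈ A with ρ a < k, (levelCard ρ (ρ a) : ℚ)⁻¹ := by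
  have hlevel : ∑ a ∈ A with ρ a = k, (levelCard ρ (ρ a) : ℚ)⁻¹ =
      #{a ∈ A | ρ a = k} / levelCard ρ k := by
    rw [sum_congr rfl fun a ha => by rw [(mem_filter.1 ha).2], sum_const, nsmul_eq_mul,
      div_eq_mul_inv]
  rw [← hlevel, sum_filter, sum_filter, sum_filter, ← sum_add_distrib]
  refine sum_congr rfl fun a _ => ?_
  grind

theorem HasNormalizedMatching.sum_inv_levelCard_le_upperLevel [Std.Refl r] [IsTrans α r]
    (h : HasNormalizedMatching r ρ) (hρ : ∀ k, levelCard ρ k = 0 → levelCard ρ (k + 1) = 0)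
    {A : Finset α} (hA : IsAntichain r (A : Set α)) {k : ℕ} (hk : levelCard ρ k ≠ 0) :
    ∑ a ∈ A with ρ a < k + 1, (levelCard ρ (ρ a) : ℚ)⁻¹ ≤
      #(upperLevel r ρ {a ∈ A | ρ a < k + 1} k) / levelCard ρ k := by
  have hlower : ∑ a ∈ A with ρ a < k, (levelCard ρ (ρ a) : ℚ)⁻¹ ≤
      #(upperLevel r ρ {a ∈ A | ρ a < k} k) / levelCard ρ k := by
    cases k with
    | zero => simpa using by positivity
    | succ k =>
      have hk' : levelCard ρ k ≠ 0 := mt (hρ k) hk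
      refine (h.sum_inv_levelCard_le_upperLevel hρ hA hk').trans ?_
      rw [div_le_div_iff₀ (by positivity) (by positivity)]
      exact_mod_cast h.card_upperLevel_mul_le _ k
  calc ∑ a ∈ A with ρ a < k + 1, (levelCard ρ (ρ a) : ℚ)⁻¹
      ≤ #{a ∈ A | ρ a = k} / levelCard ρ k +
          #(upperLevel r ρ {a ∈ A | ρ a < k} k) / levelCard ρ k := by
        rw [sum_inv_levelCard_filter_lt_succ]; gcongr
    _ ≤ #(upperLevel r ρ {a ∈ A | ρ a < k + 1} k) / levelCard ρ k := by
        rw [← add_div]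
        gcongr
        exact_mod_cast card_level_add_card_upperLevel_le hA k

theorem HasNormalizedMatching.sum_inv_levelCard_le_one [Std.Refl r] [IsTrans α r]
    (h : HasNormalizedMatching r ρ) (hρ : ∀ k, levelCard ρ k = 0 → levelCard ρ (k + 1) = 0)
    {A : Finset α} (hA : IsAntichain r (A : Set α)) :
    ∑ a ∈ A, (levelCard ρ (ρ a) : ℚ)⁻¹ ≤ 1 := by
  rcases A.eq_empty_or_nonempty with rfl | hne
  · simp
  obtain ⟨b, _, hmax⟩ := A.exists_max_image ρ hne
  have hlevel : levelCard ρ (ρ b) ≠ 0 := levelCard_apply_ne_zero ρ b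
  calc ∑ a ∈ A, (levelCard ρ (ρ a) : ℚ)⁻¹
      = ∑ a ∈ A with ρ a < ρ b + 1, (levelCard ρ (ρ a) : ℚ)⁻¹ := by
        rw [filter_true_of_mem fun a ha => Nat.lt_succ_of_le (hmax a ha)]
    _ ≤ #(upperLevel r ρ {a ∈ A | ρ a < ρ b + 1} (ρ b)) / levelCard ρ (ρ b) :=
        h.sum_inv_levelCard_le_upperLevel hρ hA hlevel
    _ ≤ 1 := div_le_one_of_le₀ (mod_cast card_upperLevel_le _ _) (Nat.cast_nonneg _)

theorem HasNormalizedMatching.card_le_of_levelCard_le [Std.Refl r] [IsTrans α r]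
    (h : HasNormalizedMatching r ρ) (hρ : ∀ k, levelCard ρ k = 0 → levelCard ρ (k + 1) = 0)
    {A : Finset α} (hA : IsAntichain r (A : Set α)) {M : ℕ}
    (hM : ∀ a ∈ A, levelCard ρ (ρ a) ≤ M) : #A ≤ M := by
  suffices (#A : ℚ) ≤ M from mod_cast this
  calc (#A : ℚ) = ∑ a ∈ A, 1 := by simp
    _ ≤ ∑ a ∈ A, M * (levelCard ρ (ρ a) : ℚ)⁻¹ := by
        refine sum_le_sum fun a ha => ?_
        have hpos : (0 : ℚ) < levelCard ρ (ρ a) :=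
          mod_cast Nat.pos_of_ne_zero (levelCard_apply_ne_zero ρ a)
        rw [← div_eq_mul_inv, one_le_div hpos]
        exact mod_cast hM a ha
    _ = M * ∑ a ∈ A, (levelCard ρ (ρ a) : ℚ)⁻¹ := (mul_sum ..).symm
    _ ≤ M := mul_le_of_le_one_right (Nat.cast_nonneg _) (h.sum_inv_levelCard_le_one hρ hA)

end LYM

end NormalizedMatching

section AbsoluteLength

open Equiv Equiv.Perm

variable {n : ℕ}

theorem cycleCount_add_card_support (π : Perm (Fin n)) :
    cycleCount π + π.support.card = π.cycleType.card + n := by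
  have hcompl : (Finset.univ.filter fun x => π x = x) = π.supportᶜ := by ext x; simp
  have := Finset.card_compl_add_card π.support
  rw [Fintype.card_fin] at this
  rw [cycleCount, hcompl, add_assoc, this]

theorem two_mul_card_cycleType_le (π : Perm (Fin n)) :
    2 * π.cycleType.card ≤ π.support.card := by
  have := Multiset.card_nsmul_le_sum fun _ => two_le_of_mem_cycleType (σ := π)
  rwa [sum_cycleType, smul_eq_mul, mul_comm] at this

theorem cycleCount_le (π : Perm (Fin n)) : cycleCount π ≤ n := by
  have := cycleCount_add_card_support π
  have := two_mul_card_cycleType_le π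
  lia

theorem absLength_add_card_cycleType (π : Perm (Fin n)) :
    absLength π + π.cycleType.card = π.support.card := by
  have := cycleCount_add_card_support π
  have := cycleCount_le π
  rw [absLength]
  lia

theorem cycleCount_add_absLength (π : Perm (Fin n)) : cycleCount π + absLength π = n :=
  Nat.add_sub_of_le (cycleCount_le π)

theorem absLength_eq_zero {π : Perm (Fin n)} : absLength π = 0 ↔ π = 1 := by
  have := absLength_add_card_cycleType π
  have := two_mul_card_cycleType_le π
  rw [← card_cycleType_eq_zero]
  refine ⟨fun h => by lia, fun h => ?_⟩
  have : π.support.card = 0 := by rw [card_cycleType_eq_zero.1 h, support_one, Finset.card_empty]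
  lia

theorem cycleCount_pos (hn : 0 < n) (π : Perm (Fin n)) : 0 < cycleCount π := by
  rcases eq_or_ne π 1 with rfl | hπ
  · have := cycleCount_add_absLength (1 : Perm (Fin n))
    rw [absLength_eq_zero.2 rfl] at this
    lia
  · have := cycleCount_add_card_support π
    have := card_cycleType_pos.2 hπ
    have : π.support.card ≤ n := by simpa using π.support.card_le_univ
    lia

theorem absLength_mul_of_disjoint {σ π : Perm (Fin n)} (h : σ.Disjoint π) :
    absLength (σ * π) = absLength σ + absLength π := by
  have hσπ := absLength_add_card_cycleType (σ * π)
  have := absLength_add_card_cycleType σ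
  have := absLength_add_card_cycleType π
  rw [h.cycleType_mul, h.card_support_mul, Multiset.card_add] at hσπ
  lia

theorem absLength_add_one_of_isCycle {c : Perm (Fin n)} (hc : c.IsCycle) :
    absLength c + 1 = c.support.card := by
  rw [← absLength_add_card_cycleType c, card_cycleType_eq_one.2 hc]

theorem absLength_swap_mul_of_isCycle {c : Perm (Fin n)} (hc : c.IsCycle) {x : Fin n}
    (hx : c x ≠ x) : absLength (swap x (c x) * c) + 1 = absLength c := by
  have hcard := absLength_add_one_of_isCycle hc
  by_cases hcx : c (c x) = x
  · have hswap := hc.eq_swap_of_apply_apply_eq_self hx hcx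
    have hone : swap x (c x) * c = 1 := by
      nth_rewrite 2 [hswap]
      exact swap_mul_self x (c x)
    rw [hswap, card_support_swap hx.symm, ← hswap] at hcard
    rw [hone, absLength_eq_zero.2 rfl]
    lia
  · have hcard' := absLength_add_one_of_isCycle (hc.swap_mul hx hcx)
    rw [support_swap_mul_eq c x hcx, Finset.sdiff_singleton_eq_erase] at hcard'
    have := Finset.card_erase_add_one (mem_support.2 hx)
    lia

/-- Multiplying by `(x π(x))` turns `x` into a fixed point and shortens its cycle. -/
theorem absLength_swap_mul_of_apply_ne {π : Perm (Fin n)} {x : Fin n} (hx : π x ≠ x) :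
    absLength (swap x (π x) * π) + 1 = absLength π := by
  set c := cycleOf π x with hc
  set d := π * c⁻¹ with hd
  have hcyc : c.IsCycle := isCycle_cycleOf π hx
  have hcx : c x = π x := cycleOf_apply_self π x
  have hdisj : c.Disjoint d := (disjoint_mul_inv_of_mem_cycleFactorsFinset <|
    cycleOf_mem_cycleFactorsFinset_iff.2 <| mem_support.2 hx).symm
  have hπ : π = c * d := by rw [hdisj.commute.eq, hd, inv_mul_cancel_right]
  have hdisj' : (swap x (c x) * c).Disjoint d := by
    rw [disjoint_iff_disjoint_support] at hdisj ⊢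
    exact hdisj.mono_left fun y hy => (mem_support_swap_mul_imp_mem_support_ne hy).1
  rw [← hcx]
  clear_value c d
  rw [hπ, ← mul_assoc, absLength_mul_of_disjoint hdisj', absLength_mul_of_disjoint hdisj,
    ← absLength_swap_mul_of_isCycle hcyc (hcx.trans_ne hx)]
  ring

/-- The permutation of `Fin (n + 1)` fixing `0` and acting on the other elements as `e` on
`Fin n`. -/
def fixZero : Perm (Fin n) →* Perm (Fin (n + 1)) :=
  extendDomainHom (finSuccAboveEquiv 0)

theorem fixZero_apply_zero (e : Perm (Fin n)) : fixZero e 0 = 0 :=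
  extendDomain_apply_not_subtype _ _ (by simp)

theorem fixZero_apply_succ (e : Perm (Fin n)) (i : Fin n) : fixZero e i.succ = (e i).succ :=
  extendDomain_apply_image e (finSuccAboveEquiv 0) i

theorem decomposeFin_symm_eq_swap_mul (p : Fin (n + 1)) (e : Perm (Fin n)) :
    decomposeFin.symm (p, e) = swap 0 p * fixZero e := by
  ext x
  cases x using Fin.cases <;> simp [fixZero_apply_zero, fixZero_apply_succ]

theorem absLength_fixZero (e : Perm (Fin n)) : absLength (fixZero e) = absLength e := by
  have h := absLength_add_card_cycleType (fixZero e)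
  rw [fixZero, extendDomainHom_apply, cycleType_extendDomain, card_support_extend_domain,
    ← absLength_add_card_cycleType e] at h
  exact Nat.add_right_cancel h

theorem absLength_swap_mul_fixZero (p : Fin (n + 1)) (e : Perm (Fin n)) :
    absLength (swap 0 p * fixZero e) = absLength e + if p = 0 then 0 else 1 := by
  split_ifs with hp
  · rw [hp, swap_self, ← Perm.one_def, one_mul, absLength_fixZero, add_zero]
  · have happly : (swap 0 p * fixZero e) 0 = p := by
      rw [mul_apply, fixZero_apply_zero, swap_apply_left]
    have h := absLength_swap_mul_of_apply_ne (happly.trans_ne hp)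
    rwa [happly, swap_mul_self_mul, absLength_fixZero, eq_comm] at h

theorem exists_eq_swap_mul_fixZero (π : Perm (Fin (n + 1))) :
    ∃ p e, π = swap 0 p * fixZero e :=
  ⟨(decomposeFin π).1, (decomposeFin π).2, by simp [← decomposeFin_symm_eq_swap_mul]⟩

theorem fixZero_swap (x y : Fin n) : fixZero (swap x y) = swap x.succ y.succ := by
  ext i
  cases i using Fin.cases with
  | zero => simp [fixZero_apply_zero, swap_apply_of_ne_of_ne, (Fin.succ_ne_zero _).symm]
  | succ i => rw [fixZero_apply_succ, (Fin.succ_injective n).swap_apply]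

theorem absLength_fixZero_mul_swap_mul (σ τ : Perm (Fin n)) (p : Fin (n + 1)) :
    absLength (fixZero σ * (swap 0 p * fixZero τ)) =
      absLength (σ * τ) + if p = 0 then 0 else 1 := by
  have hiff : fixZero σ p = 0 ↔ p = 0 := by
    rw [← (fixZero σ).injective.eq_iff (a := p), fixZero_apply_zero]
  rw [← mul_assoc, mul_swap_eq_swap_mul, fixZero_apply_zero, mul_assoc, ← map_mul,
    absLength_swap_mul_fixZero, if_congr hiff rfl rfl]

theorem absLength_swap_mul_le (x y : Fin n) (π : Perm (Fin n)) :
    absLength (swap x y * π) ≤ absLength π + 1 := by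
  induction n with
  | zero => exact x.elim0
  | succ n ih =>
    obtain ⟨p, e, rfl⟩ := exists_eq_swap_mul_fixZero π
    have hzero (y : Fin (n + 1)) :
        absLength (swap 0 y * (swap 0 p * fixZero e)) ≤ absLength (swap 0 p * fixZero e) + 1 := by
      cases y using Fin.cases with
      | zero => simp [← Perm.one_def]
      | succ y =>
        cases p using Fin.cases with
        | zero =>
          rw [swap_self, ← Perm.one_def, one_mul, absLength_swap_mul_fixZero, absLength_fixZero,
            if_neg y.succ_ne_zero]
        | succ p =>
          rcases eq_or_ne y p with rfl | hyp
          · rw [swap_mul_self_mul, absLength_fixZero, absLength_swap_mul_fixZero]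
            lia
          · have hne : y.succ ≠ p.succ := (Fin.succ_injective n).ne hyp
            have hswap : swap 0 y.succ * (swap 0 p.succ * fixZero e) =
                swap 0 p.succ * fixZero (swap p y * e) := by
              rw [map_mul, fixZero_swap, ← mul_assoc (swap 0 p.succ), mul_swap_eq_swap_mul,
                swap_apply_right, swap_apply_of_ne_of_ne y.succ_ne_zero hne, mul_assoc]
            rw [hswap, absLength_swap_mul_fixZero, absLength_swap_mul_fixZero]
            have := ih p y e
            lia
    cases x using Fin.cases with
    | zero => exact hzero y
    | succ x =>
      cases y using Fin.cases with
      | zero => rw [swap_comm]; exact hzero x.succ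
      | succ y =>
        rw [← fixZero_swap, absLength_fixZero_mul_swap_mul, absLength_swap_mul_fixZero]
        have := ih x y e
        lia

theorem absLength_mul_le (σ π : Perm (Fin n)) :
    absLength (σ * π) ≤ absLength σ + absLength π := by
  induction n with
  | zero => simp [Subsingleton.elim σ 1]
  | succ n ih =>
    obtain ⟨p, e, rfl⟩ := exists_eq_swap_mul_fixZero σ
    obtain ⟨q, f, rfl⟩ := exists_eq_swap_mul_fixZero π
    have hfix := absLength_fixZero_mul_swap_mul e f q
    have := ih e f
    rw [mul_assoc, absLength_swap_mul_fixZero, absLength_swap_mul_fixZero]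
    rcases eq_or_ne p 0 with rfl | hp
    · rw [swap_self, ← Perm.one_def, one_mul, if_pos rfl]
      lia
    · have := absLength_swap_mul_le 0 p (fixZero e * (swap 0 q * fixZero f))
      rw [if_neg hp]
      lia

instance : Std.Refl (absLe (n := n)) where
  refl σ := by rw [absLe, inv_mul_cancel, absLength_eq_zero.2 rfl, add_zero]

instance : IsTrans (Perm (Fin n)) absLe where
  trans σ τ π hστ hτπ := by
    have hle : absLength (σ⁻¹ * π) ≤ absLength (σ⁻¹ * τ) + absLength (τ⁻¹ * π) := by
      simpa [mul_assoc] using absLength_mul_le (σ⁻¹ * τ) (τ⁻¹ * π)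
    have hge : absLength π ≤ absLength σ + absLength (σ⁻¹ * π) := by
      simpa using absLength_mul_le σ (σ⁻¹ * π)
    unfold absLe at *
    lia

theorem absLe_swap_mul_fixZero (p : Fin (n + 1)) {σ π : Perm (Fin n)} (h : absLe σ π) :
    absLe (swap 0 p * fixZero σ) (swap 0 p * fixZero π) := by
  have hinv : (swap 0 p * fixZero σ)⁻¹ * (swap 0 p * fixZero π) = fixZero (σ⁻¹ * π) := by
    rw [map_mul, map_inv]; group
  rw [absLe] at h
  rw [absLe, hinv, absLength_fixZero, absLength_swap_mul_fixZero, absLength_swap_mul_fixZero, h,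
    add_right_comm]

theorem fixZero_absLe_swap_mul_fixZero (p : Fin (n + 1)) (σ : Perm (Fin n)) :
    absLe (fixZero σ) (swap 0 p * fixZero σ) := by
  rw [absLe, ← map_inv, absLength_fixZero_mul_swap_mul, inv_mul_cancel, absLength_eq_zero.2 rfl,
    absLength_swap_mul_fixZero, absLength_fixZero, zero_add]

theorem isAntichain_cycleCount_eq (k : ℕ) :
    IsAntichain absLe {π : Perm (Fin n) | cycleCount π = k} := by
  intro σ hσ π hπ hne hle
  have hℓ : absLength π = absLength σ := by rw [absLength, absLength, hσ, hπ]
  have hzero : absLength (σ⁻¹ * π) = 0 := by rw [absLe] at hle; lia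
  exact hne (inv_mul_eq_one.1 (absLength_eq_zero.1 hzero))

theorem levelCard_absLength_zero : levelCard (absLength (n := n)) 0 = 1 := by
  simp [levelCard, absLength_eq_zero, Finset.filter_eq']

theorem levelCard_absLength (π : Perm (Fin n)) :
    levelCard (absLength (n := n)) (absLength π) = stirlingFirst n (cycleCount π) := by
  rw [levelCard, stirlingFirst]
  congr 1 with σ
  have := cycleCount_add_absLength σ
  have := cycleCount_add_absLength π
  simp only [Finset.mem_filter_univ]
  lia

theorem absLength_decomposeFin_symm (p : Fin (n + 1)) (e : Perm (Fin n)) :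
    absLength (decomposeFin.symm (p, e)) = absLength e + if p = 0 then 0 else 1 := by
  rw [decomposeFin_symm_eq_swap_mul, absLength_swap_mul_fixZero]

theorem isLogConcave_levelCard_absLength : IsLogConcave (levelCard (absLength (n := n))) := by
  induction n with
  | zero => simp [IsLogConcave, levelCard, absLength]
  | succ n ih =>
    convert ih.add_mul_delay n with k
    exact levelCard_claw absLength_decomposeFin_symm k

theorem hasNormalizedMatching_absLe :
    HasNormalizedMatching (absLe (n := n)) absLength := by
  induction n with
  | zero => simp [HasNormalizedMatching, levelCard, absLength]
  | succ n ih =>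
    refine ih.claw isLogConcave_levelCard_absLength absLength_decomposeFin_symm ?_ ?_
    · intro p σ π h
      simpa only [decomposeFin_symm_eq_swap_mul] using absLe_swap_mul_fixZero p h
    · intro p σ
      rw [decomposeFin_symm_eq_swap_mul, decomposeFin_symm_eq_swap_mul, swap_self, ← Perm.one_def,
        one_mul]
      exact fixZero_absLe_swap_mul_fixZero p σ

theorem card_le_of_isAntichain_absLe {A : Finset (Perm (Fin n))}
    (hA : IsAntichain absLe (A : Set (Perm (Fin n)))) {M : ℕ}
    (hM : ∀ π ∈ A, stirlingFirst n (cycleCount π) ≤ M) : A.card ≤ M :=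
  hasNormalizedMatching_absLe.card_le_of_levelCard_le
    (fun _ => isLogConcave_levelCard_absLength.succ_eq_zero (by simp [levelCard_absLength_zero]))
    hA fun π hπ => (levelCard_absLength π).trans_le (hM π hπ)

end AbsoluteLength

/-- The maximum cardinality of an antichain in `S_n` under absolute order
equals the largest unsigned Stirling number of the first kind
`max_{1 ≤ k ≤ n} s(n,k)`; in particular some level `{π : c(π) = k}` is an
antichain of maximum cardinality. -/
theorem max_antichain_eq_max_stirling (n : ℕ) (hn : 1 ≤ n) :
    IsGreatest {m : ℕ | ∃ A : Finset (Equiv.Perm (Fin n)),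
        IsAntichain absLe (A : Set (Equiv.Perm (Fin n))) ∧ A.card = m}
      ((Finset.Icc 1 n).sup fun k => stirlingFirst n k) ∧
    ∃ k ∈ Finset.Icc 1 n,
      IsAntichain absLe {π : Equiv.Perm (Fin n) | cycleCount π = k} ∧
      (Finset.univ.filter fun π : Equiv.Perm (Fin n) => cycleCount π = k).card =
        (Finset.Icc 1 n).sup fun k => stirlingFirst n k := by
  obtain ⟨k, hk, hsup⟩ := Finset.exists_mem_eq_sup (Finset.Icc 1 n)
    (Finset.nonempty_Icc.2 hn) (stirlingFirst n)
  have hlevel := isAntichain_cycleCount_eq (n := n) k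
  refine ⟨⟨⟨_, by simpa using hlevel, hsup.symm⟩, ?_⟩, k, hk, hlevel, hsup.symm⟩
  rintro _ ⟨A, hA, rfl⟩
  exact card_le_of_isAntichain_absLe hA fun π _ => Finset.le_sup (f := stirlingFirst n) <|
    Finset.mem_Icc.2 ⟨cycleCount_pos hn π, cycleCount_le π⟩
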